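/- arXiv:2307.00946 — 6 statements merged into one kernel-verified Lean document; each statement's English description precedes it below -/
import Mathlib

section
/- Let H be a complex Hilbert space and let S and T be densely defined skew-selfadjoint operators on H. Then the range of S is contained in the kernel of T if and only if the range of T is contained in the kernel of S. (In particular, the condition defining an annihilating pair of skew-selfadjoint operators is symmetric.) -/
noncomputable section

open LinearPMap

/-- The range `{S x : x ∈ dom S}` of a partially defined linear operator. -/
def pRan {E F : Type*} [NormedAddCommGroup E] [NormedAddCommGroup F]
    [InnerProductSpace ℂ E] [InnerProductSpace ℂ F] (S : E →ₗ.[ℂ] F) : Set F :=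
  Set.range fun x : S.domain => S x

/-- The kernel `{x ∈ dom S : S x = 0}` of a partially defined linear operator. -/
def pKer {E F : Type*} [NormedAddCommGroup E] [NormedAddCommGroup F]
    [InnerProductSpace ℂ E] [InnerProductSpace ℂ F] (S : E →ₗ.[ℂ] F) : Set E :=
  {x | ∃ hx : x ∈ S.domain, S ⟨x, hx⟩ = 0}

/-!
The kernel of an adjoint is the orthogonal complement of the range, so `ran S ⊆ ker T†` says that
`ran S` and `ran T` are orthogonal, which is symmetric in `S` and `T`. For skew-selfadjoint
operators the adjoints have the same kernels as the operators themselves.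
-/

section

variable {E F G : Type*} [NormedAddCommGroup E] [NormedAddCommGroup F] [NormedAddCommGroup G]
  [InnerProductSpace ℂ E] [InnerProductSpace ℂ F] [InnerProductSpace ℂ G]

theorem pKer_neg (S : E →ₗ.[ℂ] F) : pKer (-S) = pKer S := by
  simp only [pKer, LinearPMap.neg_domain, LinearPMap.neg_apply, neg_eq_zero]

theorem mem_pKer_adjoint_iff [CompleteSpace E] {S : E →ₗ.[ℂ] F}
    (hS : Dense (S.domain : Set E)) {y : F} :
    y ∈ pKer S† ↔ ∀ x : S.domain, inner ℂ y (S x) = 0 := by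
  constructor
  · rintro ⟨hy, hSy⟩ x
    rw [← adjoint_isFormalAdjoint hS ⟨y, hy⟩ x, hSy, inner_zero_left]
  · intro hy
    have zero_represents (x : S.domain) : inner ℂ (0 : E) (x : E) = inner ℂ y (S x) := by
      rw [hy, inner_zero_left]
    exact ⟨mem_adjoint_domain_of_exists y ⟨0, zero_represents⟩,
      adjoint_apply_eq hS _ zero_represents⟩

theorem pKer_adjoint_eq_orthogonal_range [CompleteSpace E] {S : E →ₗ.[ℂ] F}
    (hS : Dense (S.domain : Set E)) :
    pKer S† = (S.toFun.rangeᗮ : Set F) := by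
  ext y
  rw [mem_pKer_adjoint_iff hS, SetLike.mem_coe, Submodule.mem_orthogonal']
  exact ⟨by rintro h _ ⟨x, rfl⟩; exact h x, fun h x => h _ ⟨x, rfl⟩⟩

theorem pRan_subset_pKer_adjoint_iff_isOrtho [CompleteSpace G] (S : E →ₗ.[ℂ] F)
    {T : G →ₗ.[ℂ] F} (hT : Dense (T.domain : Set G)) :
    pRan S ⊆ pKer T† ↔ S.toFun.range ⟂ T.toFun.range := by
  rw [pKer_adjoint_eq_orthogonal_range hT]
  exact Iff.rfl

theorem annihilating_symm_general [CompleteSpace E] [CompleteSpace G]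
    {S : E →ₗ.[ℂ] F} {T : G →ₗ.[ℂ] F}
    (hS : Dense (S.domain : Set E)) (hT : Dense (T.domain : Set G)) :
    pRan S ⊆ pKer T† ↔ pRan T ⊆ pKer S† := by
  rw [pRan_subset_pKer_adjoint_iff_isOrtho S hT, pRan_subset_pKer_adjoint_iff_isOrtho T hS,
    Submodule.isOrtho_comm]

end

/-- for densely defined skew-selfadjoint operators `S`, `T` on a complex
Hilbert space `H`, `ran S ⊆ ker T` iff `ran T ⊆ ker S`. -/
theorem annihilating_symm {H : Type*} [NormedAddCommGroup H] [InnerProductSpace ℂ H]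
    [CompleteSpace H] (S T : H →ₗ.[ℂ] H)
    (hSdense : Dense (S.domain : Set H)) (hTdense : Dense (T.domain : Set H))
    (hSskew : S.adjoint = -S) (hTskew : T.adjoint = -T) :
    pRan S ⊆ pKer T ↔ pRan T ⊆ pKer S := by
  simpa only [hSskew, hTskew, pKer_neg] using annihilating_symm_general hSdense hTdense
end
end

section
/- Generalized Helmholtz decomposition: Let H be a complex Hilbert space and let S₁, …, S_N be an annihilating set of skew-selfadjoint operators on H, i.e. each S_i is densely defined and skew-selfadjoint and ran(S_i) ⊆ ker(S_j) for all i ≠ j. Set K := ⋂_{i=1}^{N} ker(S_i). Then the closed subspaces K, closure(ran(S₁)), …, closure(ran(S_N)) are pairwise orthogonal and H is their orthogonal direct sum: H = K ⊕ closure(ran(S₁)) ⊕ ⋯ ⊕ closure(ran(S_N)). -/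
/-!
For a densely defined operator `S`, the kernel of `S†` is the orthogonal complement of the range
of `S`; if `S† = -S`, this says `ker S = (closure (ran S))ᗮ`. The annihilation hypothesis therefore
means exactly that the closed ranges are pairwise orthogonal, and `K = ⋂ ker (S i)` is the
orthogonal complement of their span. A vector orthogonal to `K` and to every range lies in `K ⊓ Kᗮ`,
so the summands span a dense subspace. The orthogonal expansion along them then recovers every
vector, and for finitely many summands the expansion is a finite sum.
-/

noncomputable section

open LinearPMap
open scoped ComplexInnerProductSpace

/-- The kernel of a partially defined linear operator, as a submodule of the ambient space. -/
def kerSub {E F : Type*} [NormedAddCommGroup E] [NormedAddCommGroup F]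
    [InnerProductSpace ℂ E] [InnerProductSpace ℂ F] (S : E →ₗ.[ℂ] F) : Submodule ℂ E :=
  (LinearMap.ker S.toFun).map S.domain.subtype

/-- The closure of the range of a partially defined linear operator. -/
def ranClos {E F : Type*} [NormedAddCommGroup E] [NormedAddCommGroup F]
    [InnerProductSpace ℂ E] [InnerProductSpace ℂ F] (S : E →ₗ.[ℂ] F) : Submodule ℂ F :=
  (LinearMap.range S.toFun).topologicalClosure

section HilbertSum

variable {𝕜 E ι : Type*} [RCLike 𝕜] [NormedAddCommGroup E] [InnerProductSpace 𝕜 E]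
  [CompleteSpace E]

theorem isHilbertSum_of_none_eq_iInf_orthogonal {V : Option ι → Submodule 𝕜 E}
    (hclosed : ∀ i, IsClosed (V (some i) : Set E))
    (hortho : Pairwise fun i j => V (some i) ⟂ V (some j))
    (hnone : V none = ⨅ i, (V (some i))ᗮ) :
    IsHilbertSum 𝕜 (fun o => V o) fun o => (V o).subtypeₗᵢ := by
  have hnone_ortho (i : ι) : V none ⟂ V (some i) := hnone.trans_le (iInf_le _ i)
  have hfamily : OrthogonalFamily 𝕜 (fun o => V o) fun o => (V o).subtypeₗᵢ := by
    refine OrthogonalFamily.of_pairwise ?_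
    rintro (_ | i) (_ | j) hne
    · exact absurd rfl hne
    · exact hnone_ortho j
    · exact (hnone_ortho i).symm
    · exact hortho fun hij => hne (congrArg some hij)
  have htotal : (⨆ o, V o)ᗮ = ⊥ := by
    rw [← Submodule.iInf_orthogonal, iInf_option, ← hnone, inf_comm,
      Submodule.inf_orthogonal_eq_bot]
  have hcomplete (o : Option ι) : CompleteSpace (V o) := by
    cases o with
    | none =>
      rw [hnone, Submodule.iInf_orthogonal]
      infer_instance
    | some i => exact (hclosed i).completeSpace_coe
  exact IsHilbertSum.mkInternal V hfamily (Submodule.topologicalClosure_eq_top_iff.mpr htotal).ge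

theorem iSup_range_eq_top_of_isHilbertSum [Finite ι] {G : ι → Type*}
    [∀ i, NormedAddCommGroup (G i)] [∀ i, InnerProductSpace 𝕜 (G i)] {V : ∀ i, G i →ₗᵢ[𝕜] E}
    (hV : IsHilbertSum 𝕜 G V) : ⨆ i, LinearMap.range (V i).toLinearMap = ⊤ := by
  have := Fintype.ofFinite ι
  refine Submodule.eq_top_iff'.mpr fun x => ?_
  have hexpansion : ∑ i, V i (hV.linearIsometryEquiv x i) = x := by
    simpa using (hasSum_fintype _).unique
      (hV.hasSum_linearIsometryEquiv_symm (hV.linearIsometryEquiv x))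
  rw [← hexpansion]
  exact Submodule.sum_mem _ fun i _ => Submodule.mem_iSup_of_mem i (LinearMap.mem_range_self _ _)

end HilbertSum

section Kernel

variable {E F : Type*} [NormedAddCommGroup E] [InnerProductSpace ℂ E]
  [NormedAddCommGroup F] [InnerProductSpace ℂ F]

theorem mem_kerSub_iff {S : E →ₗ.[ℂ] F} {x : E} :
    x ∈ kerSub S ↔ ∃ hx : x ∈ S.domain, S ⟨x, hx⟩ = 0 := by
  simp [kerSub]

theorem kerSub_neg (S : E →ₗ.[ℂ] F) : kerSub (-S) = kerSub S := by
  ext x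
  simp [mem_kerSub_iff]

theorem kerSub_adjoint [CompleteSpace E] {S : E →ₗ.[ℂ] F} (hS : Dense (S.domain : Set E)) :
    kerSub S† = (ranClos S)ᗮ := by
  ext y
  rw [ranClos, Submodule.orthogonal_closure, Submodule.mem_orthogonal', mem_kerSub_iff]
  constructor
  · rintro ⟨hy, hy_zero⟩ _ ⟨x, rfl⟩
    calc
      ⟪y, S x⟫ = ⟪S† ⟨y, hy⟩, (x : E)⟫ := (adjoint_isFormalAdjoint hS ⟨y, hy⟩ x).symm
      _ = 0 := by rw [hy_zero, inner_zero_left]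
  · intro hy
    have hzero (x : S.domain) : ⟪(0 : E), (x : E)⟫ = ⟪y, S x⟫ := by
      rw [inner_zero_left, ← hy _ ⟨x, rfl⟩, toFun_eq_coe]
    have hy_domain : y ∈ S†.domain := mem_adjoint_domain_of_exists y ⟨0, hzero⟩
    exact ⟨hy_domain, adjoint_apply_eq hS ⟨y, hy_domain⟩ hzero⟩

end Kernel

theorem generalized_helmholtz_general {H ι : Type*} [NormedAddCommGroup H]
    [InnerProductSpace ℂ H] [CompleteSpace H] (S : ι → (H →ₗ.[ℂ] H))
    (hdense : ∀ i, Dense ((S i).domain : Set H))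
    (hker : ∀ i, kerSub (S i)† = kerSub (S i))
    (hannih : ∀ i j, i ≠ j → ∀ x : (S i).domain, S i x ∈ kerSub (S j))
    (V : Option ι → Submodule ℂ H)
    (hVK : V none = ⨅ i, kerSub (S i))
    (hVran : ∀ i, V (some i) = ranClos (S i)) :
    IsHilbertSum ℂ (fun o => V o) fun o => (V o).subtypeₗᵢ := by
  have hker_eq (i : ι) : kerSub (S i) = (V (some i))ᗮ := by
    rw [← hker, hVran, kerSub_adjoint (hdense i)]
  apply isHilbertSum_of_none_eq_iInf_orthogonal
  · intro i
    rw [hVran]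
    exact Submodule.isClosed_topologicalClosure _
  · intro i j hij
    rw [Submodule.isOrtho_iff_le, hVran i]
    refine Submodule.topologicalClosure_minimal _ ?_ (Submodule.isClosed_orthogonal _)
    rintro _ ⟨x, rfl⟩
    exact hker_eq j ▸ hannih i j hij x
  · simp only [hVK, hker_eq]

/-- generalized Helmholtz decomposition: for an annihilating set
`S 0, …, S (N-1)` of densely defined skew-selfadjoint operators on a complex Hilbert space `H`,
the subspaces `K := ⋂ ker (S i)`, `closure (ran (S 0))`, …, `closure (ran (S (N-1)))` are
pairwise orthogonal and their (internal orthogonal direct) sum is all of `H`. -/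
theorem generalized_helmholtz {H : Type*} [NormedAddCommGroup H] [InnerProductSpace ℂ H]
    [CompleteSpace H] {N : ℕ} (S : Fin N → (H →ₗ.[ℂ] H))
    (hdense : ∀ i, Dense ((S i).domain : Set H))
    (hskew : ∀ i, (S i).adjoint = -(S i))
    (hannih : ∀ i j, i ≠ j → ∀ x : (S i).domain, ((S i) x) ∈ kerSub (S j))
    (V : Option (Fin N) → Submodule ℂ H)
    (hVK : V none = ⨅ i, kerSub (S i))
    (hVran : ∀ i, V (some i) = ranClos (S i)) :
    (∀ o₁ o₂, o₁ ≠ o₂ → ∀ x ∈ V o₁, ∀ y ∈ V o₂, ⟪x, y⟫ = 0) ∧ (⨆ o, V o) = ⊤ := by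
  have hsum := generalized_helmholtz_general S hdense (fun i => by rw [hskew, kerSub_neg]) hannih
    V hVK hVran
  exact ⟨fun _ _ hne x hx y hy => (hsum.OrthogonalFamily.isOrtho hne).inner_eq hx hy,
    by simpa using iSup_range_eq_top_of_isHilbertSum hsum⟩
end
end

section
/- Let H₁ and H₂ be complex Hilbert spaces and let a : dom(a) ⊆ H₁ → H₂ be a closed densely defined linear operator with adjoint a* : dom(a*) ⊆ H₂ → H₁. On the Hilbert space H := H₁ ×₂ H₂ (the product with the ℓ²-norm), define the operator S with domain dom(S) := dom(a) × dom(a*) by S(x, y) := (−a* y, a x). Then S is skew-selfadjoint, i.e. S* = −S. -/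
noncomputable section

open LinearPMap

/-!
The adjoint of the off-diagonal block operator with upper right entry `b` and lower left entry `a`
is the one with entries `a†` and `b†`: pairing with the vectors `(x, 0)` and `(0, y)` separates the
two components of the defining identity of the adjoint. The operator `S` is the block operator with
entries `-a†` and `a`, so its adjoint has entries `a†` and `-a††`. Finally `a†† = a` because `a` is
closed: up to a rotation of the product, the graph of the adjoint is the orthogonal complement of
the graph.
-/

section

open WithLp

variable {𝕜 E F : Type*} [RCLike 𝕜]
  [NormedAddCommGroup E] [InnerProductSpace 𝕜 E] [NormedAddCommGroup F] [InnerProductSpace 𝕜 F]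

section DoubleAdjoint

theorem mem_orthogonal_comap_linearEquiv_iff (g : Submodule 𝕜 (E × F)) (w : WithLp 2 (E × F)) :
    w ∈ (g.comap (WithLp.linearEquiv 2 𝕜 (E × F)).toLinearMap)ᗮ ↔
      (w.snd, -w.fst) ∈ g.adjoint := by
  rw [Submodule.mem_adjoint_iff, Submodule.mem_orthogonal]
  simp only [inner_neg_right, sub_neg_eq_add, add_comm (inner 𝕜 _ w.snd)]
  exact ⟨fun h x y hxy => h (toLp 2 (x, y)) hxy, fun h u hu => h u.fst u.snd hu⟩

theorem mem_adjoint_adjoint_iff (g : Submodule 𝕜 (E × F)) (x : E × F) :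
    x ∈ g.adjoint.adjoint ↔
      toLp 2 x ∈ (g.comap (WithLp.linearEquiv 2 𝕜 (E × F)).toLinearMap)ᗮᗮ := by
  rw [Submodule.mem_adjoint_iff, Submodule.mem_orthogonal]
  simp only [mem_orthogonal_comap_linearEquiv_iff]
  constructor
  · intro h w hw
    have hx := h w.snd (-w.fst) hw
    rw [inner_neg_left, ← neg_add', neg_eq_zero] at hx
    exact hx
  · intro h y w hyw
    have hx := h (toLp 2 (-w, y)) (by simpa using hyw)
    simp only [prod_inner_apply, inner_neg_left] at hx
    rwa [← neg_eq_zero, neg_sub', sub_neg_eq_add]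

theorem adjoint_adjoint_eq_topologicalClosure [CompleteSpace E] [CompleteSpace F]
    (g : Submodule 𝕜 (E × F)) : g.adjoint.adjoint = g.topologicalClosure := by
  ext x
  rw [mem_adjoint_adjoint_iff, Submodule.orthogonal_orthogonal_eq_closure]
  change toLp 2 x ∈ closure (WithLp.homeomorphProd 2 E F ⁻¹' (g : Set (E × F))) ↔ _
  rw [← (WithLp.homeomorphProd 2 E F).preimage_closure]
  rfl

theorem closure_eq_of_isClosed {R M N : Type*} [CommRing R] [TopologicalSpace R]
    [AddCommGroup M] [Module R M] [TopologicalSpace M] [ContinuousAdd M] [ContinuousSMul R M]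
    [AddCommGroup N] [Module R N] [TopologicalSpace N] [ContinuousAdd N] [ContinuousSMul R N]
    {T : M →ₗ.[R] N} (hT : T.IsClosed) : T.closure = T :=
  eq_of_eq_graph <|
    hT.isClosable.graph_closure_eq_closure_graph.symm.trans hT.submodule_topologicalClosure_eq

variable [CompleteSpace E] {T : E →ₗ.[𝕜] F}

theorem mem_graph_adjoint_iff (hT : Dense (T.domain : Set E)) {y : F} {w : E} :
    (y, w) ∈ T†.graph ↔ ∀ x : T.domain, inner 𝕜 (T x) y = inner 𝕜 (x : E) w := by
  rw [adjoint_graph_eq_graph_adjoint hT, Submodule.mem_adjoint_iff]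
  simp only [sub_eq_zero]
  constructor
  · exact fun h x => h x (T x) (T.mem_graph x)
  · intro h a b hab
    obtain ⟨x, rfl, rfl⟩ := (mem_graph_iff T).1 hab
    exact h x

theorem adjoint_neg (T : E →ₗ.[𝕜] F) : (-T)† = -T† := by
  refine LinearPMap.ext ?_ fun y hy hy' => ?_
  · ext y
    have hcomp : (innerₛₗ 𝕜 y).comp (-T).toFun = -(innerₛₗ 𝕜 y).comp T.toFun :=
      LinearMap.comp_neg _ _
    rw [mem_adjoint_domain_iff, hcomp]
    exact continuous_neg_iff
  · by_cases hT : Dense (T.domain : Set E)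
    · refine adjoint_apply_eq (T := -T) hT _ fun x => ?_
      rw [LinearPMap.neg_apply, LinearPMap.neg_apply, inner_neg_left, inner_neg_right]
      exact congrArg Neg.neg (adjoint_isFormalAdjoint hT ⟨y, hy'⟩ x)
    · rw [adjoint_apply_of_not_dense (T := -T) hT, LinearPMap.neg_apply,
        adjoint_apply_of_not_dense hT, neg_zero]

variable [CompleteSpace F]

theorem dense_adjoint_domain_of_isClosable (hT : Dense (T.domain : Set E)) (hc : T.IsClosable) :
    Dense (T†.domain : Set F) := by
  rw [Submodule.dense_iff_topologicalClosure_eq_top, Submodule.topologicalClosure_eq_top_iff,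
    Submodule.eq_bot_iff]
  intro v hv
  have hgraph : ((0 : E), v) ∈ T.closure.graph := by
    rw [← hc.graph_closure_eq_closure_graph, ← adjoint_adjoint_eq_topologicalClosure,
      ← adjoint_graph_eq_graph_adjoint hT, Submodule.mem_adjoint_iff]
    intro y w hyw
    rw [inner_zero_right, zero_sub, neg_eq_zero]
    exact hv y (mem_domain_of_mem_graph hyw)
  exact T.closure.graph_fst_eq_zero_snd hgraph rfl

theorem adjoint_adjoint_of_isClosable (hT : Dense (T.domain : Set E)) (hc : T.IsClosable) :
    T†† = T.closure := by
  apply eq_of_eq_graph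
  rw [adjoint_graph_eq_graph_adjoint (dense_adjoint_domain_of_isClosable hT hc),
    adjoint_graph_eq_graph_adjoint hT, adjoint_adjoint_eq_topologicalClosure,
    hc.graph_closure_eq_closure_graph]

end DoubleAdjoint

section OffDiagonalBlock

/-- The operator `(x, y) ↦ (b y, a x)` on the Hilbert sum of `E` and `F`, with domain
`dom a × dom b`. The arguments are in the order of the rows of the block matrix, `b` being its
upper right entry and `a` its lower left one. -/
def offDiagonalBlock (b : F →ₗ.[𝕜] E) (a : E →ₗ.[𝕜] F) :
    WithLp 2 (E × F) →ₗ.[𝕜] WithLp 2 (E × F) where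
  domain := (a.domain.prod b.domain).comap (WithLp.linearEquiv 2 𝕜 (E × F)).toLinearMap
  toFun :=
    { toFun z := toLp 2 (b ⟨z.1.snd, z.2.2⟩, a ⟨z.1.fst, z.2.1⟩)
      map_add' z w := by
        have hb := b.map_add ⟨z.1.snd, z.2.2⟩ ⟨w.1.snd, w.2.2⟩
        have ha := a.map_add ⟨z.1.fst, z.2.1⟩ ⟨w.1.fst, w.2.1⟩
        exact congrArg (toLp 2) (Prod.ext hb ha)
      map_smul' c z := by
        have hb := b.map_smul c ⟨z.1.snd, z.2.2⟩
        have ha := a.map_smul c ⟨z.1.fst, z.2.1⟩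
        exact congrArg (toLp 2) (Prod.ext hb ha) }

theorem neg_offDiagonalBlock (b : F →ₗ.[𝕜] E) (a : E →ₗ.[𝕜] F) :
    -offDiagonalBlock b a = offDiagonalBlock (-b) (-a) :=
  rfl

theorem dense_domain_offDiagonalBlock {b : F →ₗ.[𝕜] E} {a : E →ₗ.[𝕜] F}
    (hb : Dense (b.domain : Set F)) (ha : Dense (a.domain : Set E)) :
    Dense ((offDiagonalBlock b a).domain : Set (WithLp 2 (E × F))) :=
  (ha.prod hb).preimage (WithLp.homeomorphProd 2 E F).isOpenMap

theorem mem_graph_offDiagonalBlock_iff {b : F →ₗ.[𝕜] E} {a : E →ₗ.[𝕜] F}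
    {z w : WithLp 2 (E × F)} :
    (z, w) ∈ (offDiagonalBlock b a).graph ↔
      (z.snd, w.fst) ∈ b.graph ∧ (z.fst, w.snd) ∈ a.graph := by
  simp only [mem_graph_iff]
  constructor
  · rintro ⟨x, rfl, rfl⟩
    exact ⟨⟨⟨_, x.2.2⟩, rfl, rfl⟩, ⟨⟨_, x.2.1⟩, rfl, rfl⟩⟩
  · rintro ⟨⟨y, hy, hby⟩, ⟨x, hx, hax⟩⟩
    exact ⟨⟨toLp 2 (x, y), x.2, y.2⟩, congrArg (toLp 2) (Prod.ext hx hy),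
      congrArg (toLp 2) (Prod.ext hby hax)⟩

variable [CompleteSpace E] [CompleteSpace F]

theorem adjoint_offDiagonalBlock {b : F →ₗ.[𝕜] E} {a : E →ₗ.[𝕜] F}
    (hb : Dense (b.domain : Set F)) (ha : Dense (a.domain : Set E)) :
    (offDiagonalBlock b a)† = offDiagonalBlock a† b† := by
  apply eq_of_eq_graph
  ext ⟨z, w⟩
  rw [mem_graph_adjoint_iff (dense_domain_offDiagonalBlock hb ha), mem_graph_offDiagonalBlock_iff,
    mem_graph_adjoint_iff ha, mem_graph_adjoint_iff hb]
  have pairing (x : a.domain) (y : b.domain) :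
      inner 𝕜 (offDiagonalBlock b a ⟨toLp 2 (x, y), x.2, y.2⟩) z = inner 𝕜 (toLp 2 (↑x, ↑y)) w ↔
      inner 𝕜 (b y) z.fst + inner 𝕜 (a x) z.snd = inner 𝕜 (x : E) w.fst + inner 𝕜 (y : F) w.snd :=
    Iff.rfl
  constructor
  · intro h
    refine ⟨fun x => ?_, fun y => ?_⟩
    · simpa using (pairing x 0).1 (h _)
    · simpa using (pairing 0 y).1 (h _)
  · rintro ⟨hza, hzb⟩ ⟨x, hx⟩
    exact (pairing ⟨x.fst, hx.1⟩ ⟨x.snd, hx.2⟩).2 (by rw [hza, hzb, add_comm])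

theorem adjoint_offDiagonalBlock_neg_adjoint {a : E →ₗ.[𝕜] F}
    (hdense : Dense (a.domain : Set E)) (hclosed : a.IsClosed) :
    (offDiagonalBlock (-a†) a)† = -offDiagonalBlock (-a†) a := by
  have hadj : Dense ((-a†).domain : Set F) :=
    dense_adjoint_domain_of_isClosable hdense hclosed.isClosable
  have hadjadj : a†† = a :=
    (adjoint_adjoint_of_isClosable hdense hclosed.isClosable).trans
      (closure_eq_of_isClosed hclosed)
  calc
    (offDiagonalBlock (-a†) a)† = offDiagonalBlock a† (-a†)† :=
      adjoint_offDiagonalBlock hadj hdense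
    _ = offDiagonalBlock a† (-a) := by rw [adjoint_neg, hadjadj]
    _ = -offDiagonalBlock (-a†) a := by rw [neg_offDiagonalBlock, neg_neg]

theorem skewAdjoint_of_block_general (a : E →ₗ.[𝕜] F) (hadense : Dense (a.domain : Set E))
    (haclosed : a.IsClosed) (S : WithLp 2 (E × F) →ₗ.[𝕜] WithLp 2 (E × F))
    (hdom : ∀ z : WithLp 2 (E × F), z ∈ S.domain ↔ z.fst ∈ a.domain ∧ z.snd ∈ a†.domain)
    (hact : ∀ (z : S.domain) (h1 : z.1.fst ∈ a.domain) (h2 : z.1.snd ∈ a†.domain),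
      ofLp (S z) = (-(a† ⟨z.1.snd, h2⟩), a ⟨z.1.fst, h1⟩)) :
    S† = -S := by
  obtain rfl : S = offDiagonalBlock (-a†) a :=
    LinearPMap.ext (Submodule.ext hdom) fun z hz hz' =>
      ofLp_injective 2 (hact ⟨z, hz⟩ hz'.1 hz'.2)
  exact adjoint_offDiagonalBlock_neg_adjoint hadense haclosed

end OffDiagonalBlock

end

/-- if `a : dom(a) ⊆ H₁ → H₂` is a closed densely defined operator between complex
Hilbert spaces, then the operator `S (x, y) := (−a* y, a x)` with domain `dom(a) × dom(a*)` on
the ℓ²-product `H₁ ×₂ H₂` is skew-selfadjoint, `S* = −S`. -/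
theorem skewAdjoint_of_block {H₁ H₂ : Type*}
    [NormedAddCommGroup H₁] [InnerProductSpace ℂ H₁] [CompleteSpace H₁]
    [NormedAddCommGroup H₂] [InnerProductSpace ℂ H₂] [CompleteSpace H₂]
    (a : H₁ →ₗ.[ℂ] H₂) (hadense : Dense (a.domain : Set H₁)) (haclosed : a.IsClosed)
    (S : WithLp 2 (H₁ × H₂) →ₗ.[ℂ] WithLp 2 (H₁ × H₂))
    (hdom : ∀ z : WithLp 2 (H₁ × H₂), z ∈ S.domain ↔
      (WithLp.equiv 2 (H₁ × H₂) z).1 ∈ a.domain ∧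
      (WithLp.equiv 2 (H₁ × H₂) z).2 ∈ a.adjoint.domain)
    (hact : ∀ (z : S.domain)
      (h1 : (WithLp.equiv 2 (H₁ × H₂) z.1).1 ∈ a.domain)
      (h2 : (WithLp.equiv 2 (H₁ × H₂) z.1).2 ∈ a.adjoint.domain),
      WithLp.equiv 2 (H₁ × H₂) (S z) =
        (-(a.adjoint ⟨(WithLp.equiv 2 (H₁ × H₂) z.1).2, h2⟩),
          a ⟨(WithLp.equiv 2 (H₁ × H₂) z.1).1, h1⟩)) :
    S.adjoint = -S :=
  skewAdjoint_of_block_general a hadense haclosed S hdom hact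
end
end

section
/- Friedrichs/Poincaré-type inequality: Let H be a complex Hilbert space and S : dom(S) ⊆ H → H a densely defined skew-selfadjoint operator such that the embedding dom(S) ↪ H is compact, i.e. every sequence (xₙ) in dom(S) with (‖xₙ‖) and (‖S xₙ‖) bounded has a subsequence converging in H. Then there exists a constant c > 0 such that for all x ∈ dom(S) ∩ ker(S)^⊥ one has ‖x‖_H ≤ c ‖S x‖_H. -/
noncomputable section

open LinearPMap
open scoped ComplexInnerProductSpace

/-- The range of a partially defined linear operator, as a submodule. -/
def ranSub {E F : Type*} [NormedAddCommGroup E] [NormedAddCommGroup F]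
    [InnerProductSpace ℂ E] [InnerProductSpace ℂ F] (S : E →ₗ.[ℂ] F) : Submodule ℂ F :=
  LinearMap.range S.toFun

/-!
Once `S` is bounded below on a shell `r ≤ ‖x‖ ≤ R` of a closed subspace `K`, rescaling gives
the inequality on all of `K`. If there were no such lower bound, some `xₙ ∈ K` in the shell would
satisfy `S xₙ → 0`; compactness extracts a limit, which lies in `K` and has norm at least `r`,
and which `S` annihilates because its graph is closed. This is impossible when `K` meets the kernel
trivially, as `(ker S)ᗮ` does. A skew-selfadjoint `S` is closed because adjoints are.
-/

section Topological

open Filter Topology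

variable {R E F : Type*} [CommRing R] [AddCommGroup E] [AddCommGroup F] [Module R E] [Module R F]
  [TopologicalSpace E] [TopologicalSpace F] {S : E →ₗ.[R] F}

lemma isClosed_linearPMap_neg [ContinuousNeg F] (hS : S.IsClosed) : (-S).IsClosed := by
  have hgraph : ((-S).graph : Set (E × F)) = Prod.map id Neg.neg ⁻¹' S.graph := by
    ext ⟨x, y⟩
    simp [neg_eq_iff_eq_neg]
  rw [LinearPMap.IsClosed, hgraph]
  exact hS.preimage (continuous_id.prodMap continuous_neg)

lemma mem_graph_of_tendsto {ι : Type*} {l : Filter ι} [l.NeBot] (hS : S.IsClosed)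
    {u : ι → S.domain} {x : E} {y : F} (hx : Tendsto (fun i ↦ (u i : E)) l (𝓝 x))
    (hy : Tendsto (fun i ↦ S (u i)) l (𝓝 y)) : (x, y) ∈ S.graph :=
  IsClosed.mem_of_tendsto hS (hx.prodMk_nhds hy) (.of_forall fun i ↦ S.mem_graph (u i))

lemma mem_map_ker_of_tendsto {ι : Type*} {l : Filter ι} [l.NeBot] (hS : S.IsClosed)
    {u : ι → S.domain} {x : E} (hx : Tendsto (fun i ↦ (u i : E)) l (𝓝 x))
    (hSu : Tendsto (fun i ↦ S (u i)) l (𝓝 0)) :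
    x ∈ S.toFun.ker.map S.domain.subtype := by
  obtain ⟨z, hzx, hSz⟩ := S.mem_graph_iff.1 (mem_graph_of_tendsto hS hx hSu)
  exact ⟨z, hSz, hzx⟩

end Topological

section Normed

open Filter Topology

variable {𝕜 E F : Type*} [NontriviallyNormedField 𝕜]
  [SeminormedAddCommGroup E] [NormedSpace 𝕜 E] [SeminormedAddCommGroup F] [NormedSpace 𝕜 F]

lemma norm_le_inv_mul_norm_apply_of_shell (f : E →ₗ[𝕜] F) {c : 𝕜} (hc : 1 < ‖c‖) {δ : ℝ}
    (hδ : 0 < δ) (hf : ∀ x, 1 / ‖c‖ ≤ ‖x‖ → ‖x‖ ≤ 1 → δ ≤ ‖f x‖) (x : E) :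
    ‖x‖ ≤ δ⁻¹ * ‖f x‖ := by
  by_cases hx : ‖x‖ = 0
  · rw [hx]
    positivity
  obtain ⟨d, hd, hlt, hle, -⟩ := rescale_to_shell_semi_normed hc one_pos hx
  have hscaled : ‖d‖ * (δ * ‖x‖) ≤ ‖d‖ * ‖f x‖ := calc
    ‖d‖ * (δ * ‖x‖) = δ * ‖d • x‖ := by rw [norm_smul, mul_left_comm]
    _ ≤ δ := mul_le_of_le_one_right hδ.le hlt.le
    _ ≤ ‖f (d • x)‖ := hf _ hle hlt.le
    _ = ‖d‖ * ‖f x‖ := by rw [f.map_smul, norm_smul]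
  exact (le_inv_mul_iff₀ hδ).2 (le_of_mul_le_mul_left hscaled (norm_pos_iff.2 hd))

/-- Compactness of the embedding of the domain of `S`, equipped with the graph norm, into the
ambient space. It is formulated sequentially, with separate bounds on `‖u n‖` and `‖S (u n)‖` in
place of a bound on the graph norm. -/
def HasCompactDomainEmbedding (S : E →ₗ.[𝕜] F) : Prop :=
  ∀ u : ℕ → S.domain, (∃ C, ∀ n, ‖u n‖ ≤ C) → (∃ C, ∀ n, ‖S (u n)‖ ≤ C) →
    ∃ φ : ℕ → ℕ, StrictMono φ ∧ ∃ x : E, Tendsto (fun n ↦ (u (φ n) : E)) atTop (𝓝 x)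

variable {S : E →ₗ.[𝕜] F} {K : Submodule 𝕜 E}

lemma exists_pos_forall_le_norm_apply_of_shell (hS : S.IsClosed)
    (hcomp : HasCompactDomainEmbedding S) (hK : IsClosed (K : Set E))
    (hdisj : Disjoint (S.toFun.ker.map S.domain.subtype) K) {r : ℝ} (hr : 0 < r) (R : ℝ) :
    ∃ δ > 0, ∀ x : S.domain, (x : E) ∈ K → r ≤ ‖x‖ → ‖x‖ ≤ R → δ ≤ ‖S x‖ := by
  by_contra! h
  choose u huK hru huR hSu using fun n : ℕ ↦ h (1 / ((n : ℝ) + 1)) Nat.one_div_pos_of_nat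
  have hSu_zero : Tendsto (fun n ↦ S (u n)) atTop (𝓝 0) :=
    squeeze_zero_norm (fun n ↦ (hSu n).le) tendsto_one_div_add_atTop_nhds_zero_nat
  obtain ⟨C, hC⟩ := hSu_zero.norm.bddAbove_range
  obtain ⟨φ, hφ, x, hx⟩ := hcomp u ⟨R, huR⟩ ⟨C, fun n ↦ hC (Set.mem_range_self n)⟩
  have hx_ker : x ∈ S.toFun.ker.map S.domain.subtype :=
    mem_map_ker_of_tendsto hS hx (hSu_zero.comp hφ.tendsto_atTop)
  have hxK : x ∈ K := hK.mem_of_tendsto hx (.of_forall fun n ↦ huK (φ n))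
  have hrx : r ≤ ‖x‖ := ge_of_tendsto' hx.norm fun n ↦ hru (φ n)
  rw [Submodule.disjoint_def.1 hdisj x hx_ker hxK, norm_zero] at hrx
  exact hr.not_ge hrx

theorem friedrichs_poincare_type_general (hS : S.IsClosed) (hcomp : HasCompactDomainEmbedding S)
    (hK : IsClosed (K : Set E)) (hdisj : Disjoint (S.toFun.ker.map S.domain.subtype) K) :
    ∃ c : ℝ, 0 < c ∧ ∀ (x : E) (hx : x ∈ S.domain), x ∈ K → ‖x‖ ≤ c * ‖S ⟨x, hx⟩‖ := by
  obtain ⟨a, ha⟩ := NormedField.exists_one_lt_norm 𝕜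
  have hr : 0 < 1 / ‖a‖ := by positivity
  obtain ⟨δ, hδ, hle⟩ := exists_pos_forall_le_norm_apply_of_shell hS hcomp hK hdisj hr 1
  refine ⟨δ⁻¹, inv_pos.2 hδ, fun x hx hxK ↦ ?_⟩
  exact norm_le_inv_mul_norm_apply_of_shell (S.toFun.domRestrict (K.comap S.domain.subtype)) ha hδ
    (fun y ↦ hle y y.2) ⟨⟨x, hx⟩, hxK⟩

end Normed

/-- Friedrichs/Poincaré-type inequality: if `S` is a densely defined
skew-selfadjoint operator on a complex Hilbert space `H` with compact embedding `dom S ↪ H`,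
then there is `c > 0` with `‖x‖ ≤ c * ‖S x‖` for all `x ∈ dom S ∩ (ker S)ᗮ`. -/
theorem friedrichs_poincare_type {H : Type*} [NormedAddCommGroup H] [InnerProductSpace ℂ H]
    [CompleteSpace H] (S : H →ₗ.[ℂ] H)
    (hdense : Dense (S.domain : Set H)) (hskew : S.adjoint = -S)
    (hcomp : ∀ (x : ℕ → H) (hx : ∀ n, x n ∈ S.domain),
      (∃ C, ∀ n, ‖x n‖ ≤ C) → (∃ C, ∀ n, ‖S ⟨x n, hx n⟩‖ ≤ C) →
      ∃ φ : ℕ → ℕ, StrictMono φ ∧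
        ∃ l : H, Filter.Tendsto (fun n => x (φ n)) Filter.atTop (nhds l)) :
    ∃ c : ℝ, 0 < c ∧ ∀ (x : H) (hx : x ∈ S.domain), x ∈ (kerSub S)ᗮ →
      ‖x‖ ≤ c * ‖S ⟨x, hx⟩‖ := by
  have hclosed : S.IsClosed := by
    simpa only [hskew, neg_neg] using isClosed_linearPMap_neg (adjoint_isClosed hdense)
  exact friedrichs_poincare_type_general hclosed (fun u ↦ hcomp (fun n ↦ u n) fun n ↦ (u n).2)
    (kerSub S).isClosed_orthogonal (kerSub S).orthogonal_disjoint
end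
end

section
/- Inverse factorization: Let R be a (possibly noncommutative) ring, let s₁, …, s_N ∈ R satisfy s_k s_ℓ = 0 for all k ≠ ℓ, and let t ∈ R commute with each s_k. Assume t is a unit and each t + s_k is a unit, k = 1, …, N. Then t + s₁ + ⋯ + s_N is a unit and (t + s₁ + ⋯ + s_N)⁻¹ = t^{N−1} · ∏_{k=1}^{N} (t + s_k)⁻¹. -/
/-!
If `t` commutes with `b` and `b * a = 0`, then `(t + b) * (t + a) = t * (t + (a + b))`. Iterating
this collapses the product of the `t + s k`, taken in decreasing order of `k`, to
`t ^ n * (t + ∑ k, s k)` for `n + 1` elements. The two factors of the latter commute, so they are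
both units as soon as every `t + s k` is, and inverting the product reverses its order.
-/

theorem ringInverse_list_prod {M₀ : Type*} [MonoidWithZero M₀] {l : List M₀}
    (hl : ∀ a ∈ l, IsUnit a) :
    Ring.inverse l.prod = (l.map Ring.inverse).reverse.prod := by
  induction l with
  | nil => simp
  | cons a l ih =>
    obtain ⟨ha, hl⟩ := List.forall_mem_cons.mp hl
    simp [Ring.inverse_mul (.inl ha), ih hl]

theorem mul_ringInverse_mul_of_commute {M₀ : Type*} [MonoidWithZero M₀] {a b : M₀}
    (hab : Commute a b) (ha : IsUnit a) :
    a * Ring.inverse (a * b) = Ring.inverse b := by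
  rw [hab.eq, Ring.inverse_mul (.inr ha), Ring.mul_inverse_cancel_left _ _ ha]

section Semiring

variable {R : Type*} [Semiring R]

theorem add_mul_add_of_mul_eq_zero {t a b : R} (htb : Commute t b) (hba : b * a = 0) :
    (t + b) * (t + a) = t * (t + (a + b)) := by
  simp only [add_mul, mul_add, hba, htb.eq, add_zero]
  abel

theorem pow_mul_add_sum_eq_prod_reverse {n : ℕ} (s : Fin (n + 1) → R) (t : R)
    (hann : ∀ k ℓ, ℓ < k → s k * s ℓ = 0) (hcomm : ∀ k, Commute t (s k)) :
    t ^ n * (t + ∑ k, s k) = (List.ofFn fun k => t + s k).reverse.prod := by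
  induction n with
  | zero => simp
  | succ n ih =>
    have hcomm_tail : Commute t (∑ k : Fin (n + 1), s k.succ) :=
      Commute.sum_right _ _ _ fun k _ => hcomm k.succ
    have hann_tail : (∑ k : Fin (n + 1), s k.succ) * s 0 = 0 := by
      rw [Finset.sum_mul]
      exact Finset.sum_eq_zero fun k _ => hann _ _ k.succ_pos
    calc t ^ (n + 1) * (t + ∑ k, s k)
        = t ^ n * (t * (t + (s 0 + ∑ k : Fin (n + 1), s k.succ))) := by
          rw [Fin.sum_univ_succ, pow_succ, mul_assoc]
      _ = t ^ n * (t + ∑ k : Fin (n + 1), s k.succ) * (t + s 0) := by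
          rw [← add_mul_add_of_mul_eq_zero hcomm_tail hann_tail, mul_assoc]
      _ = (List.ofFn fun k : Fin (n + 1) => t + s k.succ).reverse.prod * (t + s 0) := by
          rw [ih _ (fun k ℓ h => hann _ _ (Fin.succ_lt_succ_iff.mpr h)) fun k => hcomm k.succ]
      _ = (List.ofFn fun k => t + s k).reverse.prod := by
          rw [List.ofFn_succ (n := n + 1), List.reverse_cons, List.prod_append,
            List.prod_singleton]

theorem inverse_factorization_general {n : ℕ} (s : Fin (n + 1) → R) (t : R)
    (hann : ∀ k ℓ, ℓ < k → s k * s ℓ = 0) (hcomm : ∀ k, Commute t (s k))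
    (hu : ∀ k, IsUnit (t + s k)) :
    IsUnit (t + ∑ k, s k) ∧
      Ring.inverse (t + ∑ k, s k) =
        t ^ n * (List.ofFn fun k => Ring.inverse (t + s k)).prod := by
  have hprod := pow_mul_add_sum_eq_prod_reverse s t hann hcomm
  have hunits : ∀ a ∈ (List.ofFn fun k => t + s k).reverse, IsUnit a := by
    simpa only [List.mem_reverse, List.forall_mem_ofFn_iff] using hu
  have hpow_comm : Commute (t ^ n) (t + ∑ k, s k) :=
    ((Commute.refl t).add_right (Commute.sum_right _ _ _ fun k _ => hcomm k)).pow_left n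
  obtain ⟨hpow, hsum⟩ : IsUnit (t ^ n) ∧ IsUnit (t + ∑ k, s k) :=
    hpow_comm.isUnit_mul_iff.mp (hprod ▸ List.prod_isUnit hunits)
  refine ⟨hsum, ?_⟩
  rw [← mul_ringInverse_mul_of_commute hpow_comm hpow, hprod, ringInverse_list_prod hunits,
    List.map_reverse, List.reverse_reverse, List.map_ofFn, Function.comp_def]

end Semiring

/-- inverse factorization: in a (possibly noncommutative) ring `R`, if
`s 0, …, s (N-1)` pairwise annihilate, `t` commutes with each `s k`, `t` is a unit and each
`t + s k` is a unit, then `t + ∑ k, s k` is a unit and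
`(t + ∑ k, s k)⁻¹ = t ^ (N - 1) * ∏ k, (t + s k)⁻¹`. -/
theorem inverse_factorization {R : Type*} [Ring R] {N : ℕ} (hN : 0 < N)
    (s : Fin N → R) (t : R)
    (hann : ∀ k ℓ : Fin N, k ≠ ℓ → s k * s ℓ = 0)
    (hcomm : ∀ k : Fin N, Commute t (s k))
    (ht : IsUnit t) (hu : ∀ k : Fin N, IsUnit (t + s k)) :
    IsUnit (t + ∑ k, s k) ∧
      Ring.inverse (t + ∑ k, s k) =
        t ^ (N - 1) * (List.ofFn fun k : Fin N => Ring.inverse (t + s k)).prod := by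
  obtain ⟨n, rfl⟩ := Nat.exists_eq_add_one.mpr hN
  exact inverse_factorization_general s t (fun k ℓ h => hann k ℓ h.ne') hcomm hu
end

section
/- Single-factor recovery: Let R be a (possibly noncommutative) ring, let s₁, …, s_N ∈ R satisfy s_k s_ℓ = 0 for all k ≠ ℓ, let t ∈ R be a unit commuting with each s_k, and set s := s₁ + ⋯ + s_N. Assume each 1 + t⁻¹ s_k is a unit, k = 1, …, N. Then for each ℓ ∈ {1, …, N}: t + s_ℓ = (∏_{ℓ ≠ k} (1 + t⁻¹ s_k)⁻¹) · (t + s), and if in addition t + s is a unit then t + s_ℓ is a unit with (t + s_ℓ)⁻¹ = (t + s)⁻¹ · ∏_{ℓ ≠ k} (1 + t⁻¹ s_k). -/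
/-!
Expanding `∏_{k ≠ ℓ} (1 + t⁻¹ s_k)`, every cross term vanishes by annihilation, so the product is
`u = 1 + t⁻¹ e` with `e = ∑_{k ≠ ℓ} s_k`. Since `e s_ℓ = 0`, multiplying out gives
`u (t + s_ℓ) = t + e + s_ℓ = t + s`. All elements involved commute, so the inverse of `u` is the
product of the inverses of its factors, and if `t + s` is a unit then so are `u` and `t + s_ℓ`.
-/

theorem prod_map_one_add_of_pairwise_mul_eq_zero {R : Type*} [NonAssocSemiring R] {l : List R}
    (h : l.Pairwise fun a b => a * b = 0) : (l.map (1 + ·)).prod = 1 + l.sum := by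
  induction l with
  | nil => simp
  | cons a l ih =>
    obtain ⟨ha, hl⟩ := List.pairwise_cons.1 h
    have ha_sum : a * l.sum = 0 := by
      rw [← AddMonoidHom.coe_mulLeft, map_list_sum]
      exact List.sum_eq_zero (List.forall_mem_map.2 ha)
    rw [List.map_cons, List.prod_cons, ih hl, List.sum_cons, add_mul, one_mul, mul_add, mul_one,
      ha_sum, add_zero, add_right_comm, add_assoc]

theorem ringInverse_list_prod_of_pairwise_commute {M : Type*} [MonoidWithZero M] {l : List M}
    (h : l.Pairwise Commute) : Ring.inverse l.prod = (l.map Ring.inverse).prod := by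
  induction l with
  | nil => simp
  | cons a l ih =>
    obtain ⟨ha, hl⟩ := List.pairwise_cons.1 h
    have ha_prod : Commute a l.prod := Commute.list_prod_right l a ha
    rw [List.prod_cons, ha_prod.eq, Ring.mul_inverse_rev' ha_prod.symm, ih hl, List.map_cons,
      List.prod_cons]

section OmittedFactors

variable {N : ℕ} {p : Fin N → Prop} [DecidablePred p]

theorem isUnit_prod_ofFn_ite {M : Type*} [Monoid M] {u : Fin N → M}
    (hu : ∀ k, ¬p k → IsUnit (u k)) : IsUnit (List.ofFn fun k => if p k then 1 else u k).prod := by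
  refine List.prod_isUnit (List.forall_mem_ofFn_iff.2 fun k => ?_)
  split_ifs with hk
  exacts [isUnit_one, hu k hk]

theorem commute_prod_ofFn_ite {M : Type*} [Monoid M] {u : Fin N → M} {x : M}
    (hu : ∀ k, ¬p k → Commute (u k) x) :
    Commute (List.ofFn fun k => if p k then 1 else u k).prod x := by
  refine Commute.list_prod_left _ _ (List.forall_mem_ofFn_iff.2 fun k => ?_)
  split_ifs with hk
  exacts [Commute.one_left x, hu k hk]

theorem ringInverse_prod_ofFn_ite {M : Type*} [MonoidWithZero M] {u : Fin N → M}
    (hu : ∀ k l, Commute (u k) (u l)) :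
    Ring.inverse (List.ofFn fun k => if p k then 1 else u k).prod =
      (List.ofFn fun k => if p k then 1 else Ring.inverse (u k)).prod := by
  have hpair : (List.ofFn fun k => if p k then 1 else u k).Pairwise Commute := by
    refine List.pairwise_ofFn.2 fun k l _ => ?_
    split_ifs <;> simp [hu k l]
  rw [ringInverse_list_prod_of_pairwise_commute hpair, List.map_ofFn]
  simp only [Function.comp_def, apply_ite Ring.inverse, Ring.inverse_one]

end OmittedFactors

theorem commute_ringInverse_left {M : Type*} [MonoidWithZero M] {a b : M} (h : Commute a b) :
    Commute (Ring.inverse a) b := by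
  by_cases ha : IsUnit a
  · obtain ⟨u, rfl⟩ := ha
    rw [Ring.inverse_unit]
    exact h.units_inv_left
  · rw [Ring.inverse_non_unit a ha]
    exact Commute.zero_left b

section Semiring

variable {R : Type*} [Semiring R] {N : ℕ}

theorem commute_one_add_mul_one_add_mul {v a b : R} (ha : Commute v a) (hb : Commute v b)
    (hab : Commute a b) : Commute (1 + v * a) (1 + v * b) :=
  have hv : Commute v (v * b) := (Commute.refl v).mul_right hb
  have ha' : Commute a (v * b) := ha.symm.mul_right hab
  (Commute.one_left _).add_left ((Commute.one_right _).add_right (hv.mul_left ha'))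

theorem prod_ofFn_one_add_mul {v : R} {a : Fin N → R}
    (hann : ∀ k l, k < l → a k * a l = 0) (hcomm : ∀ k, Commute v (a k)) :
    (List.ofFn fun k => 1 + v * a k).prod = 1 + v * ∑ k, a k := by
  have hann' : (List.ofFn fun k => v * a k).Pairwise fun x y => x * y = 0 := by
    refine List.pairwise_ofFn.2 fun k l hkl => ?_
    rw [(hcomm k).symm.mul_mul_mul_comm, hann k l hkl, mul_zero]
  have hprod := prod_map_one_add_of_pairwise_mul_eq_zero hann'
  rwa [List.map_ofFn, List.sum_ofFn, ← Finset.mul_sum] at hprod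

theorem prod_ofFn_ite_one_add_mul {p : Fin N → Prop} [DecidablePred p] {v : R} {a : Fin N → R}
    (hann : ∀ k l, k < l → a k * a l = 0) (hcomm : ∀ k, Commute v (a k)) :
    (List.ofFn fun k => if p k then 1 else 1 + v * a k).prod = 1 + v * ∑ k with ¬p k, a k := by
  have hann' : ∀ k l, k < l →
      (if p k then 0 else a k) * (if p l then 0 else a l) = 0 := fun k l hkl => by
    split_ifs <;> simp [hann k l hkl]
  have hcomm' : ∀ k, Commute v (if p k then 0 else a k) := fun k => by
    split_ifs <;> simp [hcomm k]
  have hprod := prod_ofFn_one_add_mul hann' hcomm'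
  simpa only [mul_ite, mul_zero, add_ite, add_zero, Finset.sum_ite, Finset.sum_const_zero,
    zero_add] using hprod

theorem one_add_ringInverse_mul_mul_add {t e x : R} (ht : IsUnit t) (hte : Commute t e)
    (hex : e * x = 0) : (1 + Ring.inverse t * e) * (t + x) = t + (e + x) := by
  have het : Ring.inverse t * e * t = e := by
    rw [mul_assoc, ← hte.eq, Ring.inverse_mul_cancel_left t e ht]
  rw [add_mul, one_mul, mul_add, het, mul_assoc, hex, mul_zero, add_zero, add_assoc, add_comm x]

theorem commute_one_add_ringInverse_mul_add {t e x : R} (hte : Commute t e) (htx : Commute t x)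
    (hex : Commute e x) : Commute (1 + Ring.inverse t * e) (t + x) :=
  have ht : Commute (Ring.inverse t * e) t :=
    (commute_ringInverse_left (Commute.refl t)).mul_left hte.symm
  have hx : Commute (Ring.inverse t * e) x := (commute_ringInverse_left htx).mul_left hex
  (Commute.one_left _).add_left (ht.add_right hx)

theorem prod_ofFn_ite_one_add_ringInverse_mul_mul_add {s : Fin N → R} {t : R}
    (hann : ∀ k l, k ≠ l → s k * s l = 0) (hcomm : ∀ k, Commute t (s k)) (ht : IsUnit t)
    (ℓ : Fin N) :
    (List.ofFn fun k => if k = ℓ then 1 else 1 + Ring.inverse t * s k).prod * (t + s ℓ) =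
      t + ∑ k, s k := by
  have hte : Commute t (∑ k with k ≠ ℓ, s k) := Commute.sum_right _ _ _ fun k _ => hcomm k
  have hes : (∑ k with k ≠ ℓ, s k) * s ℓ = 0 := by
    rw [Finset.sum_mul]
    exact Finset.sum_eq_zero fun k hk => hann k ℓ (Finset.mem_filter.1 hk).2
  rw [prod_ofFn_ite_one_add_mul (fun k l hkl => hann k l hkl.ne)
      fun k => commute_ringInverse_left (hcomm k),
    one_add_ringInverse_mul_mul_add ht hte hes, Finset.filter_ne',
    Finset.sum_erase_add _ _ (Finset.mem_univ ℓ)]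

theorem single_factor_recovery_general (s : Fin N → R) (t : R)
    (hann : ∀ k l, k ≠ l → s k * s l = 0) (hcomm : ∀ k, Commute t (s k)) (ht : IsUnit t)
    (ℓ : Fin N) :
    ((∀ k, k ≠ ℓ → IsUnit (1 + Ring.inverse t * s k)) →
      t + s ℓ =
        (List.ofFn fun k =>
          if k = ℓ then 1 else Ring.inverse (1 + Ring.inverse t * s k)).prod * (t + ∑ k, s k)) ∧
    (IsUnit (t + ∑ k, s k) →
      IsUnit (t + s ℓ) ∧
        Ring.inverse (t + s ℓ) =
          Ring.inverse (t + ∑ k, s k) *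
            (List.ofFn fun k => if k = ℓ then 1 else 1 + Ring.inverse t * s k).prod) := by
  set u := (List.ofFn fun k => if k = ℓ then 1 else 1 + Ring.inverse t * s k).prod with hu_def
  have hss : ∀ k l, Commute (s k) (s l) := fun k l => by
    rcases eq_or_ne k l with rfl | hkl
    exacts [Commute.refl _, (hann k l hkl).trans (hann l k hkl.symm).symm]
  have hfactors : ∀ k l, Commute (1 + Ring.inverse t * s k) (1 + Ring.inverse t * s l) :=
    fun k l => commute_one_add_mul_one_add_mul (commute_ringInverse_left (hcomm k))
      (commute_ringInverse_left (hcomm l)) (hss k l)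
  have hmul : u * (t + s ℓ) = t + ∑ k, s k :=
    prod_ofFn_ite_one_add_ringInverse_mul_mul_add hann hcomm ht ℓ
  have hu_comm : Commute u (t + s ℓ) := commute_prod_ofFn_ite fun k _ =>
    commute_one_add_ringInverse_mul_add (hcomm k) (hcomm ℓ) (hss k ℓ)
  rw [← hmul]
  refine ⟨fun hunits => ?_, fun hunit => ?_⟩
  · rw [← ringInverse_prod_ofFn_ite hfactors, ← hu_def,
      Ring.inverse_mul_cancel_left u _ (isUnit_prod_ofFn_ite hunits)]
  · obtain ⟨hu_unit, hℓ_unit⟩ := hu_comm.isUnit_mul_iff.1 hunit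
    refine ⟨hℓ_unit, ?_⟩
    rw [Ring.mul_inverse_rev' hu_comm, Ring.inverse_mul_cancel_right u _ hu_unit]

end Semiring

/-- single-factor recovery: in a (possibly noncommutative) ring `R`, if
`s 0, …, s (N-1)` pairwise annihilate, `t` is a unit commuting with each `s k`, `s := ∑ k, s k`,
and each `1 + t⁻¹ * s k` is a unit, then for every `ℓ`:
`t + s ℓ = (∏_{k ≠ ℓ} (1 + t⁻¹ * s k)⁻¹) * (t + s)` (the product over `k ≠ ℓ` being taken in
increasing order of `k`, encoded by replacing the `ℓ`-th factor by `1`), and if moreover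
`t + s` is a unit then `t + s ℓ` is a unit with
`(t + s ℓ)⁻¹ = (t + s)⁻¹ * ∏_{k ≠ ℓ} (1 + t⁻¹ * s k)`. -/
theorem single_factor_recovery {R : Type*} [Ring R] {N : ℕ}
    (s : Fin N → R) (t : R)
    (hann : ∀ k ℓ : Fin N, k ≠ ℓ → s k * s ℓ = 0)
    (hcomm : ∀ k : Fin N, Commute t (s k))
    (ht : IsUnit t)
    (hu : ∀ k : Fin N, IsUnit (1 + Ring.inverse t * s k)) :
    ∀ ℓ : Fin N,
      t + s ℓ =
        (List.ofFn fun k : Fin N =>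
          if k = ℓ then 1 else Ring.inverse (1 + Ring.inverse t * s k)).prod * (t + ∑ k, s k) ∧
      (IsUnit (t + ∑ k, s k) →
        IsUnit (t + s ℓ) ∧
          Ring.inverse (t + s ℓ) =
            Ring.inverse (t + ∑ k, s k) *
              (List.ofFn fun k : Fin N =>
                if k = ℓ then 1 else 1 + Ring.inverse t * s k).prod) := fun ℓ =>
  have ⟨hrecover, hinverse⟩ := single_factor_recovery_general s t hann hcomm ht ℓ
  ⟨hrecover fun k _ => hu k, hinverse⟩
end
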